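/- Let ω and σ be weight functions with σ(t)=o(t²) as t→∞. Then σ(t)=o(ω(t)) as t→∞ if and only if S_{{ω}}(ℝ^d) ⊆ S_{(σ)}(ℝ^d) for all dimensions d∈ℕ. The implication from σ(t)=o(ω(t)) to the inclusions holds even for general weight functions ω and σ, and for the converse only the inclusion in dimension d=1 is required. -/

import Mathlib

/-!
If `σ = o(ω)`, then `σ/l ≤ ω/m + K` on `[1, ∞)` for all `l, m > 0`; conjugation reverses this
inequality, so every weight of `ω` is dominated by every weight of `σ`
(`SRoumieuW_subset_SBeurlingW`).

Conversely, the inclusion in dimension one is tested on a single function, the superposition of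
translated Gaussians `F(x) = ∑ e^{-ω(n)} n⁻² exp (-(x-n)² / 2)`, `n ≥ 1`.

* `F` lies in the Roumieu class of `ω`. The Gaussian satisfies
  `|x^a g^{(b)}(x)| ≤ 2^b (a+b)^{(a+b)/2}` (`abs_pow_mul_gaussD_le`, by the three-term recurrence
  of the Hermite polynomials), and condition (β) bounds `k^{k/2}` by the weights of `ω`. Translating
  by `n` costs powers of `n`, which the factor `e^{-ω(n)}` turns into weights of `ω`
  (`IsWeightFun.translate_bound`). Geometric factors are absorbed by condition (α).
* All terms of `F` are positive, so `F(n) ≥ e^{-ω(n)} n⁻²` (`IsGenWeightFun.coef_le_superpos`).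
* A function in the Beurling class of `σ` is `O(x e^{-σ(x)/l})` for every `l > 0`: by convexity of
  `σ ∘ exp` the Young biconjugate of `σ` is `σ`, and rounding the optimal exponent to an integer
  loses only one factor `x` (`IsGenWeightFun.exists_pow`).

Hence `σ(n)/l ≤ ω(n) + 3 log n + C_l`, and conditions (γ) and (α) for `ω` give `σ = o(ω)`.
-/

open Filter Asymptotics

noncomputable section

/-- Partial derivative operator in coordinate `i`. -/
def pderivOp {d : ℕ} (i : Fin d) (f : (Fin d → ℝ) → ℝ) : (Fin d → ℝ) → ℝ :=
  fun x => fderiv ℝ f x (Pi.single i 1)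

/-- Iterated partial derivative `∂^β f` for a multi-index `β`. -/
def mderiv {d : ℕ} (β : Fin d → ℕ) (f : (Fin d → ℝ) → ℝ) : (Fin d → ℝ) → ℝ :=
  (List.finRange d).foldr (fun i g => (pderivOp i)^[β i] g) f

/-- The monomial `x^α` for a multi-index `α`. -/
def mpow {d : ℕ} (x : Fin d → ℝ) (α : Fin d → ℕ) : ℝ := ∏ i, x i ^ α i

/-- The length `|α| = α 0 + ⋯ + α (d-1)` of a multi-index. -/
def msize {d : ℕ} (α : Fin d → ℕ) : ℕ := ∑ i, α i

/-- Young conjugate `φ*_ω(s) = sup_{t ≥ 0} (s·t − ω(e^t))`. -/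
def youngConj (ω : ℝ → ℝ) (s : ℝ) : ℝ :=
  sSup {y : ℝ | ∃ t : ℝ, 0 ≤ t ∧ y = s * t - ω (Real.exp t)}

/-- A general weight function: continuous, increasing, `ω:[0,∞)→[0,∞)`, with
conditions (α), (γ), (δ) (condition (β) is not required). -/
structure IsGenWeightFun (ω : ℝ → ℝ) : Prop where
  nonneg : ∀ t, 0 ≤ t → 0 ≤ ω t
  continuous : ContinuousOn ω (Set.Ici 0)
  mono : MonotoneOn ω (Set.Ici 0)
  alpha : ∃ L : ℝ, 1 ≤ L ∧ ∀ t, 0 ≤ t → ω (2 * t) ≤ L * (ω t + 1)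
  gamma : Real.log =o[Filter.atTop] ω
  delta : ConvexOn ℝ (Set.Ici 0) fun t => ω (Real.exp t)

/-- A weight function: a general weight function which moreover satisfies
(β): `ω(t) = O(t²)` as `t → ∞`. -/
structure IsWeightFun (ω : ℝ → ℝ) extends IsGenWeightFun ω : Prop where
  beta : ω =O[Filter.atTop] fun t : ℝ => t ^ 2

/-- The weight `exp((1/l)·φ*_ω(l·k))`. -/
def wWeight (ω : ℝ → ℝ) (l : ℝ) (k : ℕ) : ℝ :=
  Real.exp (1 / l * youngConj ω (l * (k : ℝ)))

/-- Roumieu Gelfand–Shilov class `S_{{ω}}(ℝ^d)`. -/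
def SRoumieuW (ω : ℝ → ℝ) (d : ℕ) : Set ((Fin d → ℝ) → ℝ) :=
  {f | ContDiff ℝ (⊤ : ℕ∞) f ∧ ∃ l > 0, ∃ C > 0, ∀ α β : Fin d → ℕ, ∀ x : Fin d → ℝ,
    |mpow x α * mderiv β f x| ≤ C * wWeight ω l (msize α + msize β)}

/-- Beurling Gelfand–Shilov class `S_{(ω)}(ℝ^d)`. -/
def SBeurlingW (ω : ℝ → ℝ) (d : ℕ) : Set ((Fin d → ℝ) → ℝ) :=
  {f | ContDiff ℝ (⊤ : ℕ∞) f ∧ ∀ l > 0, ∃ C > 0, ∀ α β : Fin d → ℕ, ∀ x : Fin d → ℝ,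
    |mpow x α * mderiv β f x| ≤ C * wWeight ω l (msize α + msize β)}

/-- Continuity of the inclusion `S_(ω)(ℝ^d) ⊆ S_(σ)(ℝ^d)`: for every `μ > 0` there are
`ν > 0` and `C ≥ 1` with `q_{σ,μ}(f) ≤ C · q_{ω,ν}(f)` for all `f ∈ S_(ω)(ℝ^d)`,
expressed via bounding constants. -/
def contIncBW (ω σ : ℝ → ℝ) (d : ℕ) : Prop :=
  ∀ μ > 0, ∃ ν > 0, ∃ C : ℝ, 1 ≤ C ∧ ∀ f ∈ SBeurlingW ω d, ∀ D : ℝ, 0 ≤ D →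
    (∀ α β : Fin d → ℕ, ∀ x : Fin d → ℝ,
      |mpow x α * mderiv β f x| ≤ D * wWeight ω ν (msize α + msize β)) →
    (∀ α β : Fin d → ℕ, ∀ x : Fin d → ℝ,
      |mpow x α * mderiv β f x| ≤ C * D * wWeight σ μ (msize α + msize β))

/-- `M ∈ LC`: normalized, log-convex, with `M_p^{1/p} → ∞`. -/
structure IsLC (M : ℕ → ℝ) : Prop where
  pos : ∀ p, 0 < M p
  norm0 : M 0 = 1
  norm1 : 1 ≤ M 1
  logConvex : ∀ p : ℕ, M (p + 1) ^ 2 ≤ M p * M (p + 2)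
  root_tendsto : Filter.Tendsto (fun p : ℕ => M p ^ (1 / (p : ℝ))) Filter.atTop Filter.atTop

/-- `M ⪯ N`: `∃ C ≥ 1, ∀ p, M_p ≤ C^p N_p`. -/
def seqPreceq (M N : ℕ → ℝ) : Prop := ∃ C : ℝ, 1 ≤ C ∧ ∀ p : ℕ, M p ≤ C ^ p * N p

/-- `M ◁ N`: `(M_p/N_p)^{1/p} → 0`. -/
def seqLtriangle (M N : ℕ → ℝ) : Prop :=
  Filter.Tendsto (fun p : ℕ => (M p / N p) ^ (1 / (p : ℝ))) Filter.atTop (nhds 0)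

/-- `‖f‖_{∞,M,h} ≤ C`, expressed pointwise. -/
def seqBound {d : ℕ} (M : ℕ → ℝ) (h C : ℝ) (f : (Fin d → ℝ) → ℝ) : Prop :=
  ∀ α β : Fin d → ℕ, ∀ x : Fin d → ℝ,
    |mpow x α * mderiv β f x| ≤ C * h ^ (msize α + msize β) * M (msize α + msize β)

/-- Roumieu class `S_{{M}}(ℝ^d)` for a single weight sequence. -/
def SRoumieuSeq (M : ℕ → ℝ) (d : ℕ) : Set ((Fin d → ℝ) → ℝ) :=
  {f | ContDiff ℝ (⊤ : ℕ∞) f ∧ ∃ C > 0, ∃ h > 0, seqBound M h C f}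

/-- Beurling class `S_(M)(ℝ^d)` for a single weight sequence. -/
def SBeurlingSeq (M : ℕ → ℝ) (d : ℕ) : Set ((Fin d → ℝ) → ℝ) :=
  {f | ContDiff ℝ (⊤ : ℕ∞) f ∧ ∀ h > 0, ∃ C > 0, seqBound M h C f}

/-- Moderate growth (M2). -/
def condM2 (M : ℕ → ℝ) : Prop := ∃ C : ℝ, 1 ≤ C ∧ ∀ p q : ℕ, M (p + q) ≤ C ^ (p + q) * M p * M q

/-- Derivation closedness (M2'). -/
def condM2' (M : ℕ → ℝ) : Prop := ∃ D : ℝ, 1 ≤ D ∧ ∀ p : ℕ, M (p + 1) ≤ D ^ (p + 1) * M p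

/-- Condition (12L2R) for a single sequence. -/
def cond12L2Rseq (M : ℕ → ℝ) : Prop :=
  ∃ B > 0, ∃ C > 0, ∃ H > 0, ∀ p q : ℕ,
    (p : ℝ) ^ ((p : ℝ) / 2) * M q ≤ B * C ^ p * H ^ (p + q) * M (p + q)

/-- Condition (12L2B) for a single sequence. -/
def cond12L2Bseq (M : ℕ → ℝ) : Prop :=
  ∃ H > 0, ∀ C > 0, ∃ B > 0, ∀ p q : ℕ,
    (p : ℝ) ^ ((p : ℝ) / 2) * M q ≤ B * C ^ p * H ^ (p + q) * M (p + q)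

/-- Non-quasianalyticity of a weight sequence: `∑ M_{p-1}/M_p < ∞`. -/
def nonQA (M : ℕ → ℝ) : Prop := Summable fun p : ℕ => M p / M (p + 1)

/-- Continuity of the inclusion `S_(M)(ℝ^d) ⊆ S_(N)(ℝ^d)` for single sequences. -/
def contIncBSeq (M N : ℕ → ℝ) (d : ℕ) : Prop :=
  ∀ h > 0, ∃ h' > 0, ∃ C : ℝ, 1 ≤ C ∧ ∀ f ∈ SBeurlingSeq M d, ∀ D : ℝ, 0 ≤ D →
    seqBound M h' D f → seqBound N h (C * D) f

/-- A weight matrix: positive normalized sequences, pointwise nondecreasing in the index. -/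
def IsWeightMatrix (M : ℝ → ℕ → ℝ) : Prop :=
  (∀ l, 0 < l → (∀ p, 0 < M l p) ∧ M l 0 = 1) ∧
    ∀ l k, 0 < l → l ≤ k → ∀ p, M l p ≤ M k p

/-- Standard log-convexity of a weight matrix. -/
def StdLogConvex (M : ℝ → ℕ → ℝ) : Prop := ∀ l, 0 < l → IsLC (M l)

/-- Roumieu class `S_{{𝓜}}(ℝ^d)` for a weight matrix. -/
def SRoumieuMat (M : ℝ → ℕ → ℝ) (d : ℕ) : Set ((Fin d → ℝ) → ℝ) :=
  {f | ∃ l > 0, f ∈ SRoumieuSeq (M l) d}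

/-- Beurling class `S_(𝓜)(ℝ^d)` for a weight matrix. -/
def SBeurlingMat (M : ℝ → ℕ → ℝ) (d : ℕ) : Set ((Fin d → ℝ) → ℝ) :=
  {f | ∀ l > 0, f ∈ SBeurlingSeq (M l) d}

/-- `𝓜{⪯}𝓝`. -/
def matPreceqR (M N : ℝ → ℕ → ℝ) : Prop := ∀ l > 0, ∃ k > 0, seqPreceq (M l) (N k)

/-- `𝓜(⪯)𝓝`. -/
def matPreceqB (M N : ℝ → ℕ → ℝ) : Prop := ∀ l > 0, ∃ k > 0, seqPreceq (M k) (N l)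

/-- `𝓜 ◁ 𝓝`. -/
def matLtriangle (M N : ℝ → ℕ → ℝ) : Prop := ∀ l > 0, ∀ k > 0, seqLtriangle (M l) (N k)

/-- Condition (12L2R) for a weight matrix (Roumieu). -/
def cond12L2RMat (M : ℝ → ℕ → ℝ) : Prop :=
  ∀ l > 0, ∃ k, l ≤ k ∧ ∃ B > 0, ∃ C > 0, ∃ H > 0, ∀ p q : ℕ,
    (p : ℝ) ^ ((p : ℝ) / 2) * M l q ≤ B * C ^ p * H ^ (p + q) * M k (p + q)

/-- Condition (M2')_R for a weight matrix (Roumieu). -/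
def condM2'RMat (M : ℝ → ℕ → ℝ) : Prop :=
  ∀ l > 0, ∃ k, l ≤ k ∧ ∃ A : ℝ, 1 ≤ A ∧ ∀ p : ℕ, M l (p + 1) ≤ A ^ (p + 1) * M k p

/-- Condition (12L2B) for a weight matrix (Beurling). -/
def cond12L2BMat (M : ℝ → ℕ → ℝ) : Prop :=
  ∀ l > 0, ∃ k, 0 < k ∧ k ≤ l ∧ ∃ H > 0, ∀ C > 0, ∃ B > 0, ∀ p q : ℕ,
    (p : ℝ) ^ ((p : ℝ) / 2) * M k q ≤ B * C ^ p * H ^ (p + q) * M l (p + q)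

/-- Condition (M2')_B for a weight matrix (Beurling). -/
def condM2'BMat (M : ℝ → ℕ → ℝ) : Prop :=
  ∀ l > 0, ∃ k, 0 < k ∧ k ≤ l ∧ ∃ A : ℝ, 1 ≤ A ∧ ∀ p : ℕ, M k (p + 1) ≤ A ^ (p + 1) * M l p

/-- Continuity of the inclusion `S_(𝓜)(ℝ^d) ⊆ S_(𝓝)(ℝ^d)` for weight matrices. -/
def contIncBMat (M N : ℝ → ℕ → ℝ) (d : ℕ) : Prop :=
  ∀ l > 0, ∀ h > 0, ∃ k > 0, ∃ h' > 0, ∃ C : ℝ, 1 ≤ C ∧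
    ∀ f ∈ SBeurlingMat M d, ∀ D : ℝ, 0 ≤ D →
      seqBound (M k) h' D f → seqBound (N l) h (C * D) f

/-- Associated function `ω_M(t) = sup_p log(t^p / M_p)`. -/
def assocFun (M : ℕ → ℝ) (t : ℝ) : ℝ :=
  sSup {y : ℝ | ∃ p : ℕ, y = Real.log (t ^ p / M p)}

/-- Condition (α) for a function. -/
def condAlpha (ω : ℝ → ℝ) : Prop := ∃ L : ℝ, 1 ≤ L ∧ ∀ t, 0 ≤ t → ω (2 * t) ≤ L * (ω t + 1)

/-- Condition (ω6): `∃ H ≥ 1, ∀ t ≥ 0, 2ω(t) ≤ ω(Ht) + H`. -/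
def condOmega6 (ω : ℝ → ℝ) : Prop := ∃ H : ℝ, 1 ≤ H ∧ ∀ t, 0 ≤ t → 2 * ω t ≤ ω (H * t) + H

/-- The sequence `W^{(λ)}_p = exp((1/λ)φ*_ω(λ p))`. -/
def wSeq (ω : ℝ → ℝ) (l : ℝ) (p : ℕ) : ℝ := Real.exp (1 / l * youngConj ω (l * (p : ℝ)))

end

/-! ### The Young conjugate -/

theorem IsGenWeightFun.bddAbove_young {ω : ℝ → ℝ} (hω : IsGenWeightFun ω) (s : ℝ) :
    BddAbove {y : ℝ | ∃ t : ℝ, 0 ≤ t ∧ y = s * t - ω (Real.exp t)} := by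
  have h := hω.gamma.def (c := 1 / (|s| + 1)) (by positivity)
  obtain ⟨X, hX⟩ := eventually_atTop.1 h
  refine ⟨|s| * |X|, ?_⟩
  rintro y ⟨t, ht, rfl⟩
  have hn := hω.nonneg (Real.exp t) (Real.exp_pos t).le
  by_cases hc : X ≤ Real.exp t
  · have h1 := hX _ hc
    rw [Real.log_exp, Real.norm_of_nonneg ht, Real.norm_of_nonneg hn, one_div,
      inv_mul_eq_div, le_div_iff₀ (by positivity)] at h1
    have : 0 ≤ |s| * |X| := by positivity
    nlinarith [le_abs_self s]
  · have h2 : t ≤ |X| := by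
      have := Real.add_one_le_exp t
      linarith [le_abs_self X]
    have : s * t ≤ |s| * |X| :=
      (mul_le_mul_of_nonneg_right (le_abs_self s) ht).trans
        (mul_le_mul_of_nonneg_left h2 (abs_nonneg s))
    linarith

theorem IsGenWeightFun.le_youngConj {ω : ℝ → ℝ} (hω : IsGenWeightFun ω) (s : ℝ) {t : ℝ}
    (ht : 0 ≤ t) : s * t - ω (Real.exp t) ≤ youngConj ω s :=
  le_csSup (hω.bddAbove_young s) ⟨t, ht, rfl⟩

theorem youngConj_le {ω : ℝ → ℝ} {s B : ℝ}
    (h : ∀ t, 0 ≤ t → s * t - ω (Real.exp t) ≤ B) : youngConj ω s ≤ B := by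
  refine csSup_le ⟨_, 0, le_rfl, rfl⟩ ?_
  rintro y ⟨t, ht, rfl⟩
  exact h t ht

/-- The order-reversing behaviour of the Young conjugate. A dilation of the argument by `e^a`
in the comparison of the weight functions produces the geometric factor `e^{ak}`. -/
theorem wWeight_compare {ω σ : ℝ → ℝ} (hσ : IsGenWeightFun σ) {l m a K : ℝ}
    (hl : 0 < l) (hm : 0 < m) (ha : 0 ≤ a)
    (h : ∀ t, 0 ≤ t → σ (Real.exp (t + a)) / l ≤ ω (Real.exp t) / m + K) (k : ℕ) :
    Real.exp (a * k) * wWeight ω m k ≤ Real.exp K * wWeight σ l k := by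
  unfold wWeight
  rw [← Real.exp_add, ← Real.exp_add, Real.exp_le_exp]
  have key : youngConj ω (m * k) ≤ m * (K - a * k + 1 / l * youngConj σ (l * k)) := by
    refine youngConj_le fun t ht => ?_
    have h1 := h t ht
    have h2 := hσ.le_youngConj (l * k) (t := t + a) (by linarith)
    have h3 : 1 / l * (l * k * (t + a) - σ (Real.exp (t + a))) ≤
        1 / l * youngConj σ (l * k) := mul_le_mul_of_nonneg_left h2 (by positivity)
    have h4 : 1 / l * (l * k * (t + a) - σ (Real.exp (t + a))) =
        k * (t + a) - σ (Real.exp (t + a)) / l := by field_simp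
    have h5 : m * (k * t - ω (Real.exp t) / m) = m * k * t - ω (Real.exp t) := by
      field_simp
    rw [← h5]
    refine mul_le_mul_of_nonneg_left ?_ hm.le
    linarith
  have := mul_le_mul_of_nonneg_left key (by positivity : 0 ≤ 1 / m)
  rw [← mul_assoc, one_div_mul_cancel hm.ne', one_mul] at this
  linarith

/-- The relation `σ = o(ω)` at infinity holds on all of `[0, ∞)`, up to an additive constant. -/
theorem exists_le_add_of_isLittleO {ω σ : ℝ → ℝ} (hω : IsGenWeightFun ω)
    (hσ : IsGenWeightFun σ) (h : σ =o[atTop] ω) {c : ℝ} (hc : 0 < c) :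
    ∃ K : ℝ, ∀ x, 0 ≤ x → σ x ≤ c * ω x + K := by
  obtain ⟨X, hX⟩ := eventually_atTop.1 (h.def hc)
  refine ⟨σ |X|, fun x hx => ?_⟩
  have h1 := hω.nonneg x hx
  have h2 := hσ.nonneg x hx
  by_cases hxX : X ≤ x
  · have := hX x hxX
    rw [Real.norm_of_nonneg h1, Real.norm_of_nonneg h2] at this
    linarith [hσ.nonneg |X| (abs_nonneg X)]
  · have := hσ.mono (Set.mem_Ici.2 hx) (Set.mem_Ici.2 (abs_nonneg X))
      ((not_le.1 hxX).le.trans (le_abs_self X))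
    nlinarith

theorem SRoumieuW_subset_SBeurlingW {ω σ : ℝ → ℝ} (hω : IsGenWeightFun ω)
    (hσ : IsGenWeightFun σ) (h : σ =o[atTop] ω) (d : ℕ) : SRoumieuW ω d ⊆ SBeurlingW σ d := by
  rintro f ⟨hf, m, hm, C, hC, hb⟩
  refine ⟨hf, fun l hl => ?_⟩
  obtain ⟨K, hK⟩ := exists_le_add_of_isLittleO hω hσ h (c := l / m) (by positivity)
  refine ⟨C * Real.exp (K / l), by positivity, fun α β x => (hb α β x).trans ?_⟩
  have := wWeight_compare (ω := ω) hσ hl hm le_rfl (K := K / l) (fun t ht => ?_)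
    (msize α + msize β)
  · rw [zero_mul, Real.exp_zero, one_mul] at this
    rw [mul_assoc]
    exact mul_le_mul_of_nonneg_left this hC.le
  · rw [add_zero, div_le_iff₀ hl]
    refine (hK _ (Real.exp_pos t).le).trans_eq ?_
    field_simp

/-- Condition (α) iterated: a weight function absorbs dilations by `2 ^ n`. -/
theorem IsGenWeightFun.dilation {ω : ℝ → ℝ} (hω : IsGenWeightFun ω) (n : ℕ) :
    ∃ L : ℝ, 1 ≤ L ∧ ∀ t, 0 ≤ t → ω (2 ^ n * t) ≤ L * (ω t + 1) := by
  obtain ⟨L, hL, h⟩ := hω.alpha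
  induction n with
  | zero => exact ⟨1, le_rfl, fun t _ => by simp⟩
  | succ n ih =>
    obtain ⟨M, hM, h'⟩ := ih
    refine ⟨L * (M + 1), by nlinarith, fun t ht => ?_⟩
    have h1 := h (2 ^ n * t) (by positivity)
    have h2 := h' t ht
    have h3 := hω.nonneg t ht
    rw [pow_succ', mul_assoc]
    refine h1.trans ?_
    rw [mul_assoc]
    refine mul_le_mul_of_nonneg_left ?_ (by linarith)
    nlinarith

/-- Geometric factors are absorbed by a change of the parameter of the weight. -/
theorem IsGenWeightFun.absorb {ω : ℝ → ℝ} (hω : IsGenWeightFun ω) (H : ℝ) :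
    ∃ l > 0, ∃ C > 0, ∀ k : ℕ, H ^ k * wWeight ω 1 k ≤ C * wWeight ω l k := by
  obtain ⟨n, hn⟩ := pow_unbounded_of_one_lt |H| (by norm_num : (1 : ℝ) < 2)
  obtain ⟨L, hL, h⟩ := hω.dilation n
  have hL0 : 0 < L := by linarith
  refine ⟨L, hL0, Real.exp 1, Real.exp_pos 1, fun k => ?_⟩
  have h2n : (1 : ℝ) ≤ 2 ^ n := one_le_pow₀ (by norm_num)
  have := wWeight_compare (ω := ω) hω hL0 one_pos (Real.log_nonneg h2n) (K := 1)
    (fun t ht => ?_) k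
  · refine le_trans ?_ this
    refine mul_le_mul_of_nonneg_right ?_ (Real.exp_pos _).le
    rw [mul_comm, Real.exp_nat_mul, Real.exp_log (by positivity)]
    calc H ^ k ≤ |H ^ k| := le_abs_self _
      _ = |H| ^ k := abs_pow H k
      _ ≤ _ := pow_le_pow_left₀ (abs_nonneg H) hn.le k
  · rw [Real.exp_add, Real.exp_log (by positivity), mul_comm, div_one, div_le_iff₀ hL0,
      mul_comm _ L]
    exact h _ (Real.exp_pos t).le

theorem IsGenWeightFun.pow_mul_exp_le {ω : ℝ → ℝ} (hω : IsGenWeightFun ω) (k : ℕ) {t : ℝ}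
    (ht : 1 ≤ t) : t ^ k * Real.exp (-ω t) ≤ wWeight ω 1 k := by
  have h := hω.le_youngConj (1 * k) (Real.log_nonneg ht)
  have h0 : 0 < t := by linarith
  rw [Real.exp_log h0] at h
  have h1 : t ^ k = Real.exp (k * Real.log t) := by rw [Real.exp_nat_mul, Real.exp_log h0]
  unfold wWeight
  rw [h1, ← Real.exp_add, Real.exp_le_exp]
  linarith

/-- By condition (β), the weights dominate `k ^ (k / 2)` up to geometric factors. -/
theorem IsWeightFun.sqrt_pow_le {ω : ℝ → ℝ} (hω : IsWeightFun ω) :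
    ∃ A > 0, ∃ H ≥ 1, ∀ k : ℕ, √(k : ℝ) ^ k ≤ A * (H ^ k * wWeight ω 1 k) := by
  obtain ⟨c, hc, hb⟩ := hω.beta.exists_pos
  obtain ⟨X, hX⟩ := eventually_atTop.1 hb.bound
  -- `ω t ≤ c t² + B` for all `t ≥ 0`
  obtain ⟨B, hB⟩ : ∃ B, ∀ t, 0 ≤ t → ω t ≤ c * t ^ 2 + B := by
    refine ⟨ω |X|, fun t ht => ?_⟩
    by_cases htX : X ≤ t
    · have := hX t htX
      rw [Real.norm_of_nonneg (hω.nonneg t ht), Real.norm_of_nonneg (sq_nonneg t)] at this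
      linarith [hω.nonneg |X| (abs_nonneg X)]
    · have := hω.mono (Set.mem_Ici.2 ht) (Set.mem_Ici.2 (abs_nonneg X))
        ((not_le.1 htX).le.trans (le_abs_self X))
      nlinarith [sq_nonneg t]
  refine ⟨Real.exp (c + B), Real.exp_pos _, Real.exp c, Real.one_le_exp hc.le, fun k => ?_⟩
  -- evaluate the supremum defining the weight at `t = max 1 √k`
  have h1 := hω.pow_mul_exp_le k (le_max_left 1 √(k : ℝ))
  have h2 := hB (max 1 √(k : ℝ)) (by positivity)
  have h3 : max 1 √(k : ℝ) ^ 2 ≤ 1 + k := by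
    rcases max_cases 1 √(k : ℝ) with ⟨h, -⟩ | ⟨h, -⟩ <;> rw [h]
    · simp
    · rw [Real.sq_sqrt (by positivity)]; linarith
  have h4 : √(k : ℝ) ^ k ≤ max 1 √(k : ℝ) ^ k :=
    pow_le_pow_left₀ (by positivity) (le_max_right _ _) k
  have h5 : Real.exp (ω (max 1 √(k : ℝ))) ≤ Real.exp (c + B) * Real.exp c ^ k := by
    rw [← Real.exp_nat_mul, ← Real.exp_add, Real.exp_le_exp]
    nlinarith
  rw [Real.exp_neg, ← div_eq_mul_inv, div_le_iff₀ (Real.exp_pos _)] at h1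
  calc _ ≤ _ := h4
    _ ≤ _ := h1
    _ ≤ wWeight ω 1 k * (Real.exp (c + B) * Real.exp c ^ k) :=
      mul_le_mul_of_nonneg_left h5 (Real.exp_pos _).le
    _ = _ := by ring

/-! ### Derivatives of the Gaussian -/

/-- The `n`-th derivative of `x ↦ exp (-x² / 2)`, encoded through the three-term recurrence of the
Hermite polynomials. -/
noncomputable def gaussD : ℕ → ℝ → ℝ
  | 0, x => Real.exp (-(x ^ 2 / 2))
  | 1, x => -x * Real.exp (-(x ^ 2 / 2))
  | n + 2, x => -x * gaussD (n + 1) x - (n + 1) * gaussD n x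

theorem hasDerivAt_gaussD (n : ℕ) (x : ℝ) : HasDerivAt (gaussD n) (gaussD (n + 1) x) x := by
  have h0 (x : ℝ) : HasDerivAt (gaussD 0) (gaussD 1 x) x := by
    have := (((hasDerivAt_id x).pow 2).div_const 2).neg.exp
    refine HasDerivAt.congr_deriv (f := gaussD 0) this ?_
    simp [gaussD]; ring
  induction n using Nat.strong_induction_on generalizing x with
  | _ n ih =>
    match n with
    | 0 => exact h0 x
    | 1 =>
      have := (hasDerivAt_id x).neg.mul (h0 x)
      refine this.congr_deriv ?_
      simp [gaussD]; ring
    | n + 2 =>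
      have := ((hasDerivAt_id x).neg.mul (ih (n + 1) (by omega) x)).sub
        ((ih n (by omega) x).const_mul ((n : ℝ) + 1))
      refine HasDerivAt.congr_deriv (f := gaussD (n + 2)) this ?_
      simp [gaussD]; ring

theorem abs_pow_mul_gauss_le (k : ℕ) (x : ℝ) :
    |x| ^ k * Real.exp (-(x ^ 2 / 2)) ≤ √(k : ℝ) ^ k := by
  have h1 := Real.pow_div_factorial_le_exp (x ^ 2) (sq_nonneg x) k
  have h2 : ((k.factorial : ℕ) : ℝ) ≤ (k : ℝ) ^ k := by exact_mod_cast Nat.factorial_le_pow k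
  rw [div_le_iff₀ (by positivity)] at h1
  refine le_of_sq_le_sq ?_ (by positivity)
  have e1 : (|x| ^ k * Real.exp (-(x ^ 2 / 2))) ^ 2 = (x ^ 2) ^ k * Real.exp (-x ^ 2) := by
    rw [mul_pow, ← Real.exp_nat_mul, ← pow_mul, mul_comm k 2, pow_mul, sq_abs]
    congr 2; push_cast; ring
  have e2 : (√(k : ℝ) ^ k) ^ 2 = (k : ℝ) ^ k := by
    rw [← pow_mul, mul_comm k 2, pow_mul, Real.sq_sqrt (by positivity)]
  rw [e1, e2, Real.exp_neg, ← div_eq_mul_inv, div_le_iff₀ (Real.exp_pos _)]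
  calc _ ≤ _ := h1
    _ ≤ _ := by rw [mul_comm]; gcongr

/-- The sequence `k ^ (k / 2)` absorbs a linear factor at the cost of two steps of the index. -/
theorem nat_mul_sqrt_pow_le (k n : ℕ) (hn : n ≤ k) :
    ((n : ℝ) + 1) * √(k : ℝ) ^ k ≤ √((k + 2 : ℕ) : ℝ) ^ (k + 2) := by
  rw [pow_add, Real.sq_sqrt (by positivity), mul_comm]
  have : (n : ℝ) ≤ k := by exact_mod_cast hn
  have h2 : √(k : ℝ) ≤ √((k + 2 : ℕ) : ℝ) := Real.sqrt_le_sqrt (by push_cast; linarith)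
  gcongr
  push_cast; linarith

/-- The Gaussian satisfies Gelfand–Shilov estimates of order `1/2`. -/
theorem abs_pow_mul_gaussD_le (n k : ℕ) (x : ℝ) :
    |x| ^ k * |gaussD n x| ≤ 2 ^ n * √((k + n : ℕ) : ℝ) ^ (k + n) := by
  induction n using Nat.strong_induction_on generalizing k with
  | _ n ih =>
    match n with
    | 0 => simpa [gaussD] using abs_pow_mul_gauss_le k x
    | 1 =>
      have := abs_pow_mul_gauss_le (k + 1) x
      simp only [gaussD, abs_mul, abs_neg, Real.abs_exp]
      rw [← mul_assoc, ← pow_succ]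
      have h0 : 0 ≤ √((k + 1 : ℕ) : ℝ) ^ (k + 1) := by positivity
      linarith
    | n + 2 =>
      have h1 := ih (n + 1) (by omega) (k + 1)
      have h2 := ih n (by omega) k
      have h3 := nat_mul_sqrt_pow_le (k + n) n (by omega)
      rw [show k + 1 + (n + 1) = k + n + 2 by ring] at h1
      rw [show k + (n + 2) = k + n + 2 by ring]
      set s := √((k + n + 2 : ℕ) : ℝ) ^ (k + n + 2)
      have hs : 0 ≤ s := by positivity
      have h4 : |gaussD (n + 2) x| ≤ |x| * |gaussD (n + 1) x| + (n + 1) * |gaussD n x| := by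
        rw [gaussD]
        refine (abs_sub _ _).trans_eq ?_
        rw [abs_mul, abs_mul, abs_neg, abs_of_nonneg (by positivity : (0 : ℝ) ≤ n + 1)]
      have h5 : ((n : ℝ) + 1) * (|x| ^ k * |gaussD n x|) ≤ 2 ^ n * s :=
        calc _ ≤ ((n : ℝ) + 1) * (2 ^ n * √((k + n : ℕ) : ℝ) ^ (k + n)) := by gcongr
          _ = 2 ^ n * (((n : ℝ) + 1) * √((k + n : ℕ) : ℝ) ^ (k + n)) := by ring
          _ ≤ _ := by gcongr
      calc _ ≤ |x| ^ k * (|x| * |gaussD (n + 1) x| + (n + 1) * |gaussD n x|) := by gcongr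
        _ = |x| ^ (k + 1) * |gaussD (n + 1) x| + (n + 1) * (|x| ^ k * |gaussD n x|) := by ring
        _ ≤ 2 ^ (n + 1) * s + 2 ^ n * s := add_le_add h1 h5
        _ ≤ _ := by
          have : 0 ≤ 2 ^ n * s := by positivity
          rw [pow_succ, pow_add]; linarith

/-! ### A superposition of translated Gaussians -/

/-- The coefficients `e^{-ω(n+1)} / (n+1)²` of the superposition. -/
noncomputable def coef (ω : ℝ → ℝ) (n : ℕ) : ℝ := Real.exp (-ω (n + 1)) * (1 / ((n : ℝ) + 1) ^ 2)

/-- The `k`-th derivative of the superposition `∑ₙ e^{-ω(n+1)} (n+1)⁻² exp (-(x-n-1)² / 2)`. -/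
noncomputable def superpos (ω : ℝ → ℝ) (k : ℕ) (x : ℝ) : ℝ :=
  ∑' n : ℕ, coef ω n * gaussD k (x - (n + 1))

theorem coef_pos (ω : ℝ → ℝ) (n : ℕ) : 0 < coef ω n := by unfold coef; positivity

theorem summable_inv_sq : Summable fun n : ℕ => 1 / ((n : ℝ) + 1) ^ 2 := by
  have := (summable_nat_add_iff 1).2 (Real.summable_one_div_nat_pow.2 one_lt_two)
  simpa using this

theorem IsGenWeightFun.summable_coef {ω : ℝ → ℝ} (hω : IsGenWeightFun ω) :
    Summable (coef ω) := by
  refine Summable.of_nonneg_of_le (fun n => (coef_pos ω n).le) (fun n => ?_) summable_inv_sq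
  unfold coef
  refine mul_le_of_le_one_left (by positivity) (Real.exp_le_one_iff.2 ?_)
  linarith [hω.nonneg (n + 1) (by positivity)]

theorem norm_coef_mul_gaussD_le (ω : ℝ → ℝ) (k n : ℕ) (x : ℝ) :
    ‖coef ω n * gaussD k (x - (n + 1))‖ ≤ coef ω n * (2 ^ k * √(k : ℝ) ^ k) := by
  rw [norm_mul, Real.norm_of_nonneg (coef_pos ω n).le]
  refine mul_le_mul_of_nonneg_left ?_ (coef_pos ω n).le
  simpa using abs_pow_mul_gaussD_le k 0 (x - (n + 1))

theorem IsGenWeightFun.summable_superpos {ω : ℝ → ℝ} (hω : IsGenWeightFun ω) (k : ℕ) (x : ℝ) :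
    Summable fun n : ℕ => coef ω n * gaussD k (x - (n + 1)) :=
  Summable.of_norm_bounded (hω.summable_coef.mul_right _)
    fun n => norm_coef_mul_gaussD_le ω k n x

theorem IsGenWeightFun.hasDerivAt_superpos {ω : ℝ → ℝ} (hω : IsGenWeightFun ω) (k : ℕ) (x : ℝ) :
    HasDerivAt (superpos ω k) (superpos ω (k + 1) x) x := by
  refine hasDerivAt_tsum (hω.summable_coef.mul_right (2 ^ (k + 1) * √((k + 1 : ℕ) : ℝ) ^ (k + 1)))
    (fun n y => ?_) (fun n y => norm_coef_mul_gaussD_le ω (k + 1) n y)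
    (hω.summable_superpos k 0) x
  exact ((hasDerivAt_gaussD k (y - (n + 1))).comp_sub_const y _).const_mul _

theorem IsGenWeightFun.contDiff_superpos {ω : ℝ → ℝ} (hω : IsGenWeightFun ω) :
    ContDiff ℝ (⊤ : ℕ∞) (superpos ω 0) := by
  have e (k : ℕ) : iteratedDeriv k (superpos ω 0) = superpos ω k := by
    induction k with
    | zero => simp
    | succ k ih =>
      rw [iteratedDeriv_succ, ih]
      exact funext fun x => (hω.hasDerivAt_superpos k x).deriv
  refine contDiff_of_differentiable_iteratedDeriv fun k _ => ?_
  rw [e]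
  exact fun x => (hω.hasDerivAt_superpos k x).differentiableAt

theorem IsGenWeightFun.coef_le_superpos {ω : ℝ → ℝ} (hω : IsGenWeightFun ω) (n : ℕ) :
    coef ω n ≤ superpos ω 0 (n + 1) := by
  have := (hω.summable_superpos 0 (n + 1)).le_tsum n fun j _ =>
    mul_nonneg (coef_pos ω j).le (Real.exp_pos _).le
  simpa [superpos, gaussD] using this

/-- A translate of the Gaussian by `y ≥ 1`, damped by `e^{-ω(y)}`, satisfies Gelfand–Shilov
estimates which are uniform in `y`. -/
theorem IsWeightFun.translate_bound {ω : ℝ → ℝ} (hω : IsWeightFun ω) :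
    ∃ A > 0, ∃ H : ℝ, ∀ (a b : ℕ) (x y : ℝ), 1 ≤ y →
      |x| ^ a * |gaussD b (x - y)| * Real.exp (-ω y) ≤ A * (H ^ (a + b) * wWeight ω 1 (a + b)) := by
  obtain ⟨A, hA, H, hH, hs⟩ := hω.sqrt_pow_le
  refine ⟨2 * A + 1, by positivity, 2 * H, fun a b x y hy => ?_⟩
  have hsm := hs (a + b)
  have hW := hω.pow_mul_exp_le (a + b) hy
  set W := wWeight ω 1 (a + b)
  have hW0 : 0 < W := Real.exp_pos _
  have hE1 : Real.exp (-ω y) ≤ 1 :=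
    Real.exp_le_one_iff.2 (by linarith [hω.nonneg y (by linarith)])
  set E := Real.exp (-ω y)
  have hE : 0 < E := Real.exp_pos _
  have hHp : 1 ≤ H ^ (a + b) := one_le_pow₀ hH
  have h1 : |x| ^ a ≤ 2 ^ a * (|x - y| ^ a + y ^ a) := by
    have hx : |x| ≤ |x - y| + y := by
      have := abs_add_le (x - y) y
      rwa [sub_add_cancel, abs_of_nonneg (by linarith : 0 ≤ y)] at this
    calc |x| ^ a ≤ (|x - y| + y) ^ a := pow_le_pow_left₀ (abs_nonneg x) hx a
      _ ≤ 2 ^ (a - 1) * (|x - y| ^ a + y ^ a) := add_pow_le (abs_nonneg _) (by linarith) a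
      _ ≤ _ := by
        gcongr
        · norm_num
        · omega
  have h2 := abs_pow_mul_gaussD_le b a (x - y)
  have h3 : |gaussD b (x - y)| ≤ 2 ^ b * √(b : ℝ) ^ b := by
    simpa using abs_pow_mul_gaussD_le b 0 (x - y)
  -- compare `y` with `√b` to merge the two factors into one power of order `a + b`
  have h4 : y ^ a * √(b : ℝ) ^ b * E ≤ (A + 1) * (H ^ (a + b) * W) := by
    rcases le_total √(b : ℝ) y with h | h
    · calc _ ≤ y ^ a * y ^ b * E := by gcongr
        _ = y ^ (a + b) * E := by rw [pow_add]
        _ ≤ W := hW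
        _ ≤ 1 * (H ^ (a + b) * W) := by nlinarith
        _ ≤ _ := by gcongr; linarith
    · have hb : √(b : ℝ) ≤ √((a + b : ℕ) : ℝ) := Real.sqrt_le_sqrt (by push_cast; simp)
      calc _ ≤ √((a + b : ℕ) : ℝ) ^ a * √((a + b : ℕ) : ℝ) ^ b * 1 := by
            have := h.trans hb
            gcongr
        _ = √((a + b : ℕ) : ℝ) ^ (a + b) := by rw [pow_add, mul_one]
        _ ≤ _ := hsm
        _ ≤ _ := by gcongr; linarith
  calc |x| ^ a * |gaussD b (x - y)| * E
      ≤ 2 ^ a * (|x - y| ^ a + y ^ a) * |gaussD b (x - y)| * E := by gcongr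
    _ = 2 ^ a * (|x - y| ^ a * |gaussD b (x - y)| * E + y ^ a * |gaussD b (x - y)| * E) := by ring
    _ ≤ 2 ^ a * (2 ^ b * √((a + b : ℕ) : ℝ) ^ (a + b) * 1
          + y ^ a * (2 ^ b * √(b : ℝ) ^ b) * E) := by gcongr
    _ = 2 ^ (a + b) * (√((a + b : ℕ) : ℝ) ^ (a + b) + y ^ a * √(b : ℝ) ^ b * E) := by ring
    _ ≤ 2 ^ (a + b) * (A * (H ^ (a + b) * W) + (A + 1) * (H ^ (a + b) * W)) := by gcongr
    _ = _ := by ring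

theorem IsWeightFun.superpos_bound {ω : ℝ → ℝ} (hω : IsWeightFun ω) :
    ∃ l > 0, ∃ C > 0, ∀ (a b : ℕ) (x : ℝ),
      |x ^ a * superpos ω b x| ≤ C * wWeight ω l (a + b) := by
  obtain ⟨A, hA, H, hb⟩ := hω.translate_bound
  obtain ⟨l, hl, C, hC, hab⟩ := hω.absorb H
  set S := ∑' n : ℕ, 1 / ((n : ℝ) + 1) ^ 2
  have hS : 0 < S := summable_inv_sq.tsum_pos (fun n => by positivity) 0 (by norm_num)
  refine ⟨l, hl, S * (A * C), by positivity, fun a b x => ?_⟩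
  unfold superpos
  rw [← tsum_mul_left, ← Real.norm_eq_abs]
  have hsum := summable_inv_sq.mul_right (A * (C * wWeight ω l (a + b)))
  refine (tsum_of_norm_bounded hsum.hasSum fun n => ?_).trans_eq ?_
  · have h1 := (hb a b x (n + 1) (by linarith [(Nat.cast_nonneg n : (0 : ℝ) ≤ n)])).trans
      (mul_le_mul_of_nonneg_left (hab (a + b)) hA.le)
    rw [norm_mul, norm_mul, norm_pow, Real.norm_of_nonneg (coef_pos ω n).le, Real.norm_eq_abs,
      Real.norm_eq_abs]
    calc _ = 1 / ((n : ℝ) + 1) ^ 2 *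
          (|x| ^ a * |gaussD b (x - (n + 1))| * Real.exp (-ω (n + 1))) := by unfold coef; ring
      _ ≤ _ := mul_le_mul_of_nonneg_left h1 (by positivity)
  · rw [tsum_mul_right]; ring

/-! ### Dimension one -/

theorem pderivOp_comp_eval (G : ℝ → ℝ) (hG : Differentiable ℝ G) :
    pderivOp (0 : Fin 1) (fun x => G (x 0)) = fun x => deriv G (x 0) := by
  funext x
  have h1 : HasFDerivAt (fun x : Fin 1 → ℝ => x 0)
      (ContinuousLinearMap.proj (R := ℝ) (φ := fun _ : Fin 1 => ℝ) 0) x :=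
    (ContinuousLinearMap.proj (R := ℝ) (φ := fun _ : Fin 1 => ℝ) 0).hasFDerivAt
  have h2 := (hG (x 0)).hasDerivAt.comp_hasFDerivAt x h1
  have h3 : HasFDerivAt (fun x : Fin 1 → ℝ => G (x 0)) _ x := h2
  simp [pderivOp, h3.fderiv]

theorem IsGenWeightFun.mderiv_superpos {ω : ℝ → ℝ} (hω : IsGenWeightFun ω) (β : Fin 1 → ℕ) :
    mderiv β (fun x : Fin 1 → ℝ => superpos ω 0 (x 0)) = fun x => superpos ω (β 0) (x 0) := by
  have key (k : ℕ) : (pderivOp (0 : Fin 1))^[k] (fun x => superpos ω 0 (x 0)) =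
      fun x => superpos ω k (x 0) := by
    induction k with
    | zero => rfl
    | succ k ih =>
      rw [Function.iterate_succ_apply', ih, pderivOp_comp_eval _
        fun x => (hω.hasDerivAt_superpos k x).differentiableAt]
      exact funext fun x => (hω.hasDerivAt_superpos k (x 0)).deriv
  simpa [mderiv, List.finRange_succ] using key (β 0)

theorem IsWeightFun.superpos_mem {ω : ℝ → ℝ} (hω : IsWeightFun ω) :
    (fun x : Fin 1 → ℝ => superpos ω 0 (x 0)) ∈ SRoumieuW ω 1 := by
  obtain ⟨l, hl, C, hC, h⟩ := hω.superpos_bound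
  refine ⟨hω.contDiff_superpos.comp (contDiff_apply ℝ ℝ 0), l, hl, C, hC, fun α β x => ?_⟩
  rw [hω.mderiv_superpos]
  simpa [mpow, msize] using h (α 0) (β 0) (x 0)

/-! ### Pointwise decay in the Beurling class -/

/-- A nondecreasing convex function on `[0, ∞)` has a nonnegative subgradient at every interior
point. -/
theorem exists_subgradient {φ : ℝ → ℝ} (hφ : ConvexOn ℝ (Set.Ici 0) φ)
    (hm : MonotoneOn φ (Set.Ici 0)) {u : ℝ} (hu : 0 < u) :
    ∃ s, 0 ≤ s ∧ ∀ t, 0 ≤ t → φ u + s * (t - u) ≤ φ t := by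
  have hi : u ∈ interior (Set.Ici (0 : ℝ)) := by simpa using hu
  have hleft {t : ℝ} (ht : 0 ≤ t) (htu : t < u) : slope φ t u ≤ derivWithin φ (Set.Ioi u) u :=
    (hφ.slope_le_leftDeriv_of_mem_interior ht hi htu).trans
      (hφ.leftDeriv_le_rightDeriv_of_mem_interior hi)
  refine ⟨derivWithin φ (Set.Ioi u) u, (le_trans ?_ (hleft le_rfl hu)), fun t ht => ?_⟩
  · rw [slope_def_field]
    exact div_nonneg (sub_nonneg.2 (hm (Set.mem_Ici.2 le_rfl) (Set.mem_Ici.2 hu.le) hu.le))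
      (by linarith)
  · rcases lt_trichotomy t u with h | rfl | h
    · have := hleft ht h
      rw [slope_def_field, div_le_iff₀ (by linarith)] at this
      linarith
    · simp
    · have := hφ.rightDeriv_le_slope_of_mem_interior hi (Set.mem_Ici.2 ht) h
      rw [slope_def_field, le_div_iff₀ (by linarith)] at this
      linarith

/-- Biconjugation restricted to integer exponents: it recovers the weight function up to
`log x`. -/
theorem IsGenWeightFun.exists_pow {σ : ℝ → ℝ} (hσ : IsGenWeightFun σ) {l x : ℝ} (hl : 0 < l)
    (hx : 1 < x) : ∃ k : ℕ, wWeight σ l k ≤ x ^ k * Real.exp (Real.log x - σ x / l) := by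
  have hx0 : 0 < x := by linarith
  have hu : 0 < Real.log x := Real.log_pos hx
  have hm : MonotoneOn (fun t => σ (Real.exp t)) (Set.Ici 0) := fun a _ b _ hab =>
    hσ.mono (Real.exp_pos a).le (Real.exp_pos b).le (Real.exp_le_exp.2 hab)
  obtain ⟨s, hs, hsub⟩ := exists_subgradient hσ.delta hm hu
  simp only [Real.exp_log hx0] at hsub
  refine ⟨⌊s / l⌋₊, ?_⟩
  have h1 : (⌊s / l⌋₊ : ℝ) ≤ s / l := Nat.floor_le (by positivity)
  have h2 : s / l < ⌊s / l⌋₊ + 1 := Nat.lt_floor_add_one _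
  set k := ⌊s / l⌋₊
  have h3 : youngConj σ (l * k) ≤ s * Real.log x - σ x := by
    refine youngConj_le fun t ht => ?_
    have := hsub t ht
    have h4 : l * k * t ≤ s * t := by
      rw [le_div_iff₀ hl, mul_comm] at h1
      gcongr
    linarith
  have hp : x ^ k = Real.exp (k * Real.log x) := by rw [Real.exp_nat_mul, Real.exp_log hx0]
  unfold wWeight
  rw [hp, ← Real.exp_add, Real.exp_le_exp]
  calc _ ≤ 1 / l * (s * Real.log x - σ x) := by gcongr
    _ = s / l * Real.log x - σ x / l := by ring
    _ ≤ _ := by nlinarith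

theorem isLittleO_of_subset {ω σ : ℝ → ℝ} (hω : IsWeightFun ω) (hσ : IsWeightFun σ)
    (h : SRoumieuW ω 1 ⊆ SBeurlingW σ 1) : σ =o[atTop] ω := by
  obtain ⟨-, hB⟩ := h hω.superpos_mem
  obtain ⟨L, hL, hα⟩ := hω.alpha
  have hlog := hω.gamma.def one_pos
  -- condition (γ) makes `ω` tend to infinity
  have hωtop : Tendsto ω atTop atTop := by
    refine tendsto_atTop_mono' _ ?_ Real.tendsto_log_atTop
    filter_upwards [hlog, eventually_ge_atTop 0] with x hx hx0
    rw [one_mul, Real.norm_of_nonneg (hω.nonneg x hx0)] at hx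
    exact (le_abs_self _).trans hx
  refine IsLittleO.of_bound fun c hc => ?_
  obtain ⟨l, hl, hlc⟩ : ∃ l > 0, l * (10 * L) = c := ⟨c / (10 * L), by positivity, by field_simp⟩
  obtain ⟨C, hC, hbd⟩ := hB l hl
  -- the decay at the positive integers
  have hdecay (n : ℕ) (hn : 1 ≤ n) : σ (n + 1) / l ≤
      Real.log C + ω (n + 1) + 3 * Real.log (n + 1) := by
    have hn1 : (1 : ℝ) < n + 1 := by
      have : (1 : ℝ) ≤ n := by exact_mod_cast hn
      linarith
    have hn0 : (0 : ℝ) < n + 1 := by linarith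
    obtain ⟨k, hk⟩ := hσ.exists_pow hl hn1
    have h1 := hbd (fun _ => k) 0 (fun _ => n + 1)
    rw [hω.mderiv_superpos] at h1
    simp only [mpow, msize, Finset.univ_unique, Finset.prod_const, Finset.sum_const,
      Finset.card_singleton, pow_one, smul_eq_mul, one_mul, Pi.zero_apply, mul_zero,
      add_zero] at h1
    have h2 : (n + 1 : ℝ) ^ k * coef ω n ≤
        (n + 1 : ℝ) ^ k * (C * Real.exp (Real.log (n + 1) - σ (n + 1) / l)) :=
      calc _ ≤ (n + 1 : ℝ) ^ k * superpos ω 0 (n + 1) := by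
            gcongr; exact hω.coef_le_superpos n
        _ ≤ _ := le_abs_self _
        _ ≤ C * wWeight σ l k := h1
        _ ≤ C * ((n + 1 : ℝ) ^ k * Real.exp (Real.log (n + 1) - σ (n + 1) / l)) := by gcongr
        _ = _ := by ring
    have h3 := Real.log_le_log (coef_pos ω n) (le_of_mul_le_mul_left h2 (by positivity))
    rw [Real.log_mul hC.ne' (Real.exp_pos _).ne', Real.log_exp, coef,
      Real.log_mul (Real.exp_pos _).ne' (by positivity), Real.log_exp, one_div, Real.log_inv,
      Real.log_pow] at h3
    push_cast at h3
    linarith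
  obtain ⟨X, hX⟩ := eventually_atTop.1 (hlog.and (hωtop.eventually_ge_atTop (Real.log C)))
  filter_upwards [eventually_ge_atTop X, eventually_ge_atTop 2,
    hωtop.eventually_ge_atTop 1] with x hx hx2 hω1
  have hx0 : 0 ≤ x := by linarith
  -- pass from `x` to the integer `n + 1 ∈ [x, 2x]`
  set n := ⌊x⌋₊
  have hn1 : x ≤ n + 1 := (Nat.lt_floor_add_one x).le
  have hn2 : (n : ℝ) + 1 ≤ 2 * x := by linarith [Nat.floor_le hx0]
  have hn : 1 ≤ n := Nat.le_floor (by push_cast; linarith)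
  have hn0 : (0 : ℝ) ≤ n + 1 := by positivity
  obtain ⟨e1, e2⟩ := hX (n + 1) (by linarith)
  rw [one_mul, Real.norm_of_nonneg (hω.nonneg _ hn0)] at e1
  have e3 := hdecay n hn
  have e4 : σ (n + 1) / l ≤ 5 * ω (n + 1) := by
    linarith [le_abs_self (Real.log (n + 1)), Real.norm_eq_abs (Real.log (n + 1))]
  rw [div_le_iff₀ hl] at e4
  have e5 : ω (n + 1) ≤ L * (ω x + 1) :=
    (hω.mono hn0 (by positivity : (0 : ℝ) ≤ 2 * x) hn2).trans (hα x hx0)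
  have e6 : L * (ω x + 1) ≤ L * (2 * ω x) := by gcongr; linarith
  rw [Real.norm_of_nonneg (hσ.nonneg x hx0), Real.norm_of_nonneg (hω.nonneg x hx0)]
  calc σ x ≤ σ (n + 1) := hσ.mono hx0 hn0 hn1
    _ ≤ 5 * ω (n + 1) * l := e4
    _ ≤ 5 * (L * (2 * ω x)) * l := by gcongr; exact e5.trans e6
    _ = c * ω x := by rw [← hlc]; ring

/-- Theorem `Gelfand-inclusionnew4`: for weight functions `ω, σ` with
`σ(t) = o(t²)`, one has `σ(t) = o(ω(t))` iff `S_{{ω}}(ℝ^d) ⊆ S_(σ)(ℝ^d)` for all `d`;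
the forward implication holds for general weight functions, the converse needs only `d = 1`. -/
theorem roumieu_beurling_inclusion_characterization_weight_functions (ω σ : ℝ → ℝ) :
    ((IsGenWeightFun ω ∧ IsGenWeightFun σ ∧ σ =o[Filter.atTop] ω) →
      ∀ d : ℕ, 0 < d → SRoumieuW ω d ⊆ SBeurlingW σ d) ∧
    (IsWeightFun ω → IsWeightFun σ → (σ =o[Filter.atTop] fun t : ℝ => t ^ 2) →
      ((σ =o[Filter.atTop] ω ↔ ∀ d : ℕ, 0 < d → SRoumieuW ω d ⊆ SBeurlingW σ d) ∧
        (SRoumieuW ω 1 ⊆ SBeurlingW σ 1 → σ =o[Filter.atTop] ω))) := by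
  refine ⟨fun ⟨hω, hσ, h⟩ d _ => SRoumieuW_subset_SBeurlingW hω hσ h d, fun hω hσ _ => ?_⟩
  exact ⟨⟨fun h d _ => SRoumieuW_subset_SBeurlingW hω.toIsGenWeightFun hσ.toIsGenWeightFun h d,
    fun h => isLittleO_of_subset hω hσ (h 1 one_pos)⟩, isLittleO_of_subset hω hσ⟩
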